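/- arXiv:2103.01369 — 4 statements merged into one kernel-verified Lean document; each statement's English description precedes it below -/
import Mathlib

section
/- Fix ε ∈ (1/2, 1) and a sequence (β_n) with β_n ≥ n·2^{nε}. There exist ρ ∈ (0,1) and c > 0 such that with probability tending to 1 as n → ∞ (over X ∼ N(0, I_n)) the following holds: for every discrete-time Markov chain (X_t)_{t≥0} on B_n whose transition matrix Q satisfies Q(σ, σ') > 0 only when d_H(σ, σ') ≤ 1 and satisfies the detailed balance equations π_{β_n}(σ)·Q(σ, σ') = π_{β_n}(σ')·Q(σ', σ) for all σ, σ', and whose initial state X₀ is distributed according to π_{β_n} conditioned on the set I₃ ∪ ∂S where ∂S = {σ ∈ B_n : d_H(σ, σ*) = 1}, one has, for every T ∈ ℕ, P( ∃ t ≤ T with X_t ∉ I₃ ∪ ∂S ) ≤ T · exp(−c·β_n·2^{−nε}). -/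
/-!
The proof separates a typical property of the instance from a deterministic statement on chains.

*Instance.* Put `t = n^{-2} / 2`. With probability tending to one, every coordinate satisfies
`|X i| > 2t` (union bound, `coord_prob`), and some `σ` in the cube satisfies `|⟨σ, X⟩| ≤ t`
(`no_small_prob`). The latter is a second moment argument for the number of such `σ`: for a pair with
overlap `k = ⟨σ, σ'⟩`, `|k| < n`, the joint probability exceeds the product of the marginals by a
factor of at most about `1 / √(1 - (k/n)²) ≤ 1 + k² / n^{3/2}`, and `k²` averages to `n` over the cube,
so the relative variance is `O(n^{-1/2})`. On this event the ground state has `|⟨σ*, X⟩| ≤ t`, and as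
flipping coordinate `i` changes the inner product by `2|X i| > 4t`, each neighbour of `σ*` has energy
larger than that of `σ*` by at least `n^{-5/2}` (`gibbs_ratio`).

*Chain.* By reversibility the law of the chain at each time is dominated by `π_β / π_β(well)`
(`chain_marginal`). A chain with nearest-neighbour moves leaves the well only from a neighbour of `σ*`,
so by a union bound over time the escape probability is at most `T · π_β(∂S) / π_β(σ*)`, which is at
most `T · 2^n · exp(-β_n n^{-5/2})` (`chain_escape`, `escape_of_good`). As `β_n 2^{-nε} ≥ n` and `2^{-nε}` is
exponentially small, this is at most `T · exp(-β_n 2^{-nε})` for large `n`; hence `c = 1` works. The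
number `ρ` does not enter the escape bound.
-/

open MeasureTheory ProbabilityTheory Filter

/-- The standard Gaussian measure `N(0, I_n)` on `ℝ^n`. -/
noncomputable def stdGaussian (n : ℕ) : Measure (Fin n → ℝ) :=
  Measure.pi fun _ => gaussianReal 0 1

/-- Membership in the binary cube `B_n = {-1,1}^n`. -/
def isCube {n : ℕ} (σ : Fin n → ℝ) : Prop := ∀ i, σ i = 1 ∨ σ i = -1

/-- The standard inner product on `ℝ^n`. -/
noncomputable def ip {n : ℕ} (x y : Fin n → ℝ) : ℝ := ∑ i, x i * y i

/-- The spin configuration in `{-1,1}^n ⊂ ℝ^n` encoded by a Boolean vector. -/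
noncomputable def spin {n : ℕ} (s : Fin n → Bool) : Fin n → ℝ :=
  fun i => if s i then 1 else -1

open Classical in
/-- Hamming distance between two points of `ℝ^n`. -/
noncomputable def hdist {n : ℕ} (x y : Fin n → ℝ) : ℕ :=
  (Finset.univ.filter fun i => x i ≠ y i).card

/-- The Gibbs weight `exp(-β·H(σ))` with `H(σ) = |⟨σ, X⟩|/√n`. -/
noncomputable def gibbsWeight (n : ℕ) (b : ℝ) (X : Fin n → ℝ) (s : Fin n → Bool) : ℝ :=
  Real.exp (-b * (|ip (spin s) X| / Real.sqrt n))

/-- Membership of a state in the "well" `I₃ ∪ ∂S = {σ*} ∪ {σ : d_H(σ, σ*) = 1}`. -/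
def inWell {n : ℕ} (σs : Fin n → ℝ) (s : Fin n → Bool) : Prop :=
  spin s = σs ∨ hdist (spin s) σs = 1

open Classical in
/-- The Gibbs measure conditioned on the well `I₃ ∪ ∂S` (as an initial
distribution for the chain); the normalizing constant `Z_β` cancels. -/
noncomputable def initDist (n : ℕ) (b : ℝ) (X : Fin n → ℝ) (σs : Fin n → ℝ)
    (s : Fin n → Bool) : ℝ :=
  if inWell σs s then
    gibbsWeight n b X s /
      (∑ s' : Fin n → Bool, if inWell σs s' then gibbsWeight n b X s' else 0)
  else 0

/-! ### Linear functionals of a standard Gaussian vector -/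

theorem continuous_ip {n : ℕ} (u : Fin n → ℝ) : Continuous (ip u) := by
  unfold ip; fun_prop

instance isProbabilityMeasure_stdGaussian_fin (n : ℕ) :
    IsProbabilityMeasure (_root_.stdGaussian n) := by
  unfold _root_.stdGaussian; infer_instance

theorem hasLaw_coord {n : ℕ} (i : Fin n) :
    HasLaw (fun X : Fin n → ℝ => X i) (gaussianReal 0 1) (_root_.stdGaussian n) :=
  ⟨(measurable_pi_apply i).aemeasurable, (measurePreserving_eval (fun _ : Fin n => gaussianReal 0 1) i).map_eq⟩

theorem iIndepFun_coord (n : ℕ) :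
    iIndepFun (fun (i : Fin n) (X : Fin n → ℝ) => X i) (_root_.stdGaussian n) :=
  iIndepFun_pi (X := fun _ => id) (fun _ => aemeasurable_id)

theorem hasGaussianLaw_id_fin (n : ℕ) :
    HasGaussianLaw (fun X : Fin n → ℝ => X) (_root_.stdGaussian n) :=
  iIndepFun.hasGaussianLaw (fun i => (hasLaw_coord i).hasGaussianLaw) (iIndepFun_coord n)

theorem memLp_coord {n : ℕ} (i : Fin n) :
    MemLp (fun X : Fin n → ℝ => X i) 2 (_root_.stdGaussian n) :=
  (hasLaw_coord i).hasGaussianLaw.memLp_two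

theorem integral_coord {n : ℕ} (i : Fin n) : ∫ X, X i ∂(_root_.stdGaussian n) = 0 := by
  rw [(hasLaw_coord i).integral_eq, integral_id_gaussianReal]

theorem cov_coord {n : ℕ} (i j : Fin n) :
    cov[fun X : Fin n → ℝ => X i, fun X => X j; _root_.stdGaussian n] = if i = j then 1 else 0 := by
  split_ifs with h
  · subst h
    rw [covariance_self (measurable_pi_apply i).aemeasurable, (hasLaw_coord i).variance_eq, variance_id_gaussianReal]
    simp
  · exact ((iIndepFun_coord n).indepFun h).covariance_eq_zero (memLp_coord i) (memLp_coord j)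

theorem integral_ip {n : ℕ} (u : Fin n → ℝ) : ∫ X, ip u X ∂(_root_.stdGaussian n) = 0 := by
  unfold ip
  rw [integral_finsetSum _ fun i _ => ((memLp_coord i).integrable one_le_two).const_mul _]
  simp [integral_const_mul, integral_coord]

theorem cov_ip {n : ℕ} (u v : Fin n → ℝ) :
    cov[ip u, ip v; _root_.stdGaussian n] = ∑ i, u i * v i := by
  have h := covariance_fun_sum_fun_sum (μ := _root_.stdGaussian n)
    (X := fun (i : Fin n) (X : Fin n → ℝ) => u i * X i)
    (Y := fun (i : Fin n) (X : Fin n → ℝ) => v i * X i)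
    (fun i => (memLp_coord i).const_mul _) (fun i => (memLp_coord i).const_mul _)
  refine h.trans ?_
  simp_rw [covariance_const_mul_left, covariance_const_mul_right, cov_coord]
  simp

/-- The linear functional `X ↦ ⟨u, X⟩` as a continuous linear map. -/
noncomputable def ipCLM {n : ℕ} (u : Fin n → ℝ) : (Fin n → ℝ) →L[ℝ] ℝ :=
  ∑ i, u i • ContinuousLinearMap.proj (R := ℝ) (φ := fun _ : Fin n => ℝ) i

theorem ipCLM_apply {n : ℕ} (u X : Fin n → ℝ) : ipCLM u X = ip u X := by
  simp [ipCLM, ip]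

theorem hasGaussianLaw_pair {n : ℕ} (u v : Fin n → ℝ) :
    HasGaussianLaw (fun X => (ip u X, ip v X)) (_root_.stdGaussian n) := by
  have := (hasGaussianLaw_id_fin n).map_fun ((ipCLM u).prod (ipCLM v))
  simpa [ipCLM_apply] using this

theorem map_ip {n : ℕ} (u : Fin n → ℝ) :
    (_root_.stdGaussian n).map (ip u) = gaussianReal 0 (∑ i, u i * u i).toNNReal := by
  have h := (hasGaussianLaw_pair u u).fst.map_eq_gaussianReal
  rw [integral_ip, ← covariance_self (continuous_ip u).aemeasurable, cov_ip] at h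
  exact h

/-- For `u ⊥ v` the functionals `⟨u, X⟩` and `⟨v, X⟩` are jointly Gaussian and uncorrelated, hence
independent. -/
theorem map_pair {n : ℕ} (u v : Fin n → ℝ) (h : ∑ i, u i * v i = 0) :
    (_root_.stdGaussian n).map (fun X => (ip u X, ip v X)) =
      (gaussianReal 0 (∑ i, u i * u i).toNNReal).prod
        (gaussianReal 0 (∑ i, v i * v i).toNNReal) := by
  have hi : IndepFun (ip u) (ip v) (_root_.stdGaussian n) :=
    (hasGaussianLaw_pair u v).indepFun_of_covariance_eq_zero (by rw [cov_ip, h])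
  rw [(indepFun_iff_map_prod_eq_prod_map_map (continuous_ip u).aemeasurable
    (continuous_ip v).aemeasurable).1 hi, map_ip, map_ip]

/-! ### Small ball estimates in dimensions one and two -/

/-- The density of `N(0, a)` is at most its value `1 / √(2πa)` at the origin. -/
theorem gaussianReal_le_volume {a : ℝ} (ha : 0 < a) :
    gaussianReal 0 a.toNNReal ≤ ENNReal.ofReal (1 / √(2 * Real.pi * a)) • (volume : Measure ℝ) := by
  rw [gaussianReal_of_var_ne_zero _ (by simpa using ha), ← withDensity_const]
  refine withDensity_mono (Filter.Eventually.of_forall fun x => ENNReal.ofReal_le_ofReal ?_)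
  rw [gaussianPDFReal, Real.coe_toNNReal _ ha.le, one_div]
  refine mul_le_of_le_one_right (by positivity) (Real.exp_le_one_iff.2 ?_)
  rw [neg_div]; simp only [Left.neg_nonpos_iff]; positivity

theorem lintegral_tent {t : ℝ} (ht : 0 ≤ t) :
    ∫⁻ x : ℝ, ENNReal.ofReal (2 * (t - |x|)) = ENNReal.ofReal (2 * t ^ 2) := by
  have h1 : (fun x : ℝ => ENNReal.ofReal (2 * (t - |x|))) =
      (Set.Icc (-t) t).indicator fun x => ENNReal.ofReal (2 * (t - |x|)) := by
    ext x
    by_cases hx : x ∈ Set.Icc (-t) t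
    · simp [hx]
    · rw [Set.indicator_of_notMem hx, ENNReal.ofReal_eq_zero]
      rw [Set.mem_Icc, ← abs_le] at hx
      linarith
  rw [h1, lintegral_indicator measurableSet_Icc, ← ofReal_integral_eq_lintegral_ofReal]
  · congr 1
    rw [integral_Icc_eq_integral_Ioc, ← intervalIntegral.integral_of_le (by linarith),
      ← intervalIntegral.integral_add_adjacent_intervals (b := 0)
        (Continuous.intervalIntegrable (by fun_prop) _ _)
        (Continuous.intervalIntegrable (by fun_prop) _ _)]
    have e1 : ∫ x in (-t)..0, 2 * (t - |x|) = ∫ x in (-t)..0, (2 * t + 2 * x) := by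
      refine intervalIntegral.integral_congr fun x hx => ?_
      rw [Set.uIcc_of_le (by linarith)] at hx
      simp only [abs_of_nonpos hx.2]; ring
    have e2 : ∫ x in 0..t, 2 * (t - |x|) = ∫ x in 0..t, (2 * t - 2 * x) := by
      refine intervalIntegral.integral_congr fun x hx => ?_
      rw [Set.uIcc_of_le (by linarith)] at hx
      simp only [abs_of_nonneg hx.1]; ring
    rw [e1, e2, intervalIntegral.integral_add, intervalIntegral.integral_sub]
    · have e3 (a b : ℝ) : ∫ x in a..b, 2 * x = b ^ 2 - a ^ 2 := by
        rw [intervalIntegral.integral_const_mul, _root_.integral_id]; ring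
      rw [e3, e3, intervalIntegral.integral_const, intervalIntegral.integral_const, smul_eq_mul,
        smul_eq_mul]
      ring
    all_goals exact Continuous.intervalIntegrable (by fun_prop) _ _
  · exact (Continuous.integrableOn_Icc (by fun_prop))
  · filter_upwards [ae_restrict_mem measurableSet_Icc] with x hx
    have := abs_le.2 hx
    simp only [Pi.zero_apply]; linarith

/-- The `ℓ¹`-ball of radius `t` in the plane has area `2t²`, and the density of `N(0, a) ⊗ N(0, b)` is
at most `1 / (2π√(ab))`. The constant has to be sharp for the second moment argument. -/
theorem gaussian_prod_tent_le {a b t : ℝ} (ha : 0 < a) (hb : 0 < b) (ht : 0 ≤ t) :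
    ((gaussianReal 0 a.toNNReal).prod (gaussianReal 0 b.toNNReal))
      {p : ℝ × ℝ | |p.1| + |p.2| ≤ t} ≤ ENNReal.ofReal (t ^ 2 / (Real.pi * √(a * b))) := by
  have hm : MeasurableSet {p : ℝ × ℝ | |p.1| + |p.2| ≤ t} :=
    measurableSet_le (by fun_prop) (by fun_prop)
  rw [Measure.prod_apply hm]
  calc _ ≤ ∫⁻ x, ENNReal.ofReal (1 / √(2 * Real.pi * b)) * ENNReal.ofReal (2 * (t - |x|))
          ∂(gaussianReal 0 a.toNNReal) := by
        refine lintegral_mono fun x => ?_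
        refine (gaussianReal_le_volume hb _).trans ?_
        rw [Measure.smul_apply, smul_eq_mul]
        gcongr
        have : (Prod.mk x ⁻¹' {p : ℝ × ℝ | |p.1| + |p.2| ≤ t}) = Set.Icc (-(t - |x|)) (t - |x|) := by
          ext y; rw [Set.mem_Icc, ← abs_le]; simp [le_sub_iff_add_le']
        rw [this, Real.volume_Icc]
        exact ENNReal.ofReal_le_ofReal (by linarith)
    _ ≤ ∫⁻ x, ENNReal.ofReal (1 / √(2 * Real.pi * b)) * ENNReal.ofReal (2 * (t - |x|))
          ∂(ENNReal.ofReal (1 / √(2 * Real.pi * a)) • (volume : Measure ℝ)) :=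
        lintegral_mono' (gaussianReal_le_volume ha) le_rfl
    _ = ENNReal.ofReal (t ^ 2 / (Real.pi * √(a * b))) := by
        rw [lintegral_smul_measure, lintegral_const_mul _ (by fun_prop), lintegral_tent ht, smul_eq_mul,
          ← ENNReal.ofReal_mul (by positivity), ← ENNReal.ofReal_mul (by positivity)]
        congr 1
        have hp := Real.pi_pos
        have : √(2 * Real.pi * a) * √(2 * Real.pi * b) = 2 * Real.pi * √(a * b) := by
          rw [← Real.sqrt_mul (by positivity),
            show 2 * Real.pi * a * (2 * Real.pi * b) = (2 * Real.pi) ^ 2 * (a * b) by ring,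
            Real.sqrt_mul (by positivity), Real.sqrt_sq (by positivity)]
        have h0 : 0 < √(a * b) := by positivity
        rw [show 1 / √(2 * Real.pi * a) * (1 / √(2 * Real.pi * b) * (2 * t ^ 2))
          = 2 * t ^ 2 / (√(2 * Real.pi * a) * √(2 * Real.pi * b)) by field_simp, this]
        field_simp

theorem gaussianReal_Icc_ge {a t : ℝ} (ha : 0 < a) (ht : 0 ≤ t) :
    2 * t / √(2 * Real.pi * a) * Real.exp (-(t ^ 2 / (2 * a))) ≤
      (gaussianReal 0 a.toNNReal).real (Set.Icc (-t) t) := by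
  have hv : a.toNNReal ≠ 0 := by simpa using ha
  rw [measureReal_def, gaussianReal_apply_eq_integral _ hv, ENNReal.toReal_ofReal
    (integral_nonneg fun x => gaussianPDFReal_nonneg _ _ _)]
  have hc : ∫ x in Set.Icc (-t) t, (1 / √(2 * Real.pi * a) * Real.exp (-(t ^ 2 / (2 * a))))
      = 2 * t / √(2 * Real.pi * a) * Real.exp (-(t ^ 2 / (2 * a))) := by
    rw [setIntegral_const, measureReal_def, Real.volume_Icc, ENNReal.toReal_ofReal (by linarith), smul_eq_mul]
    ring
  rw [← hc]
  refine setIntegral_mono_on (Continuous.integrableOn_Icc (by fun_prop)) (integrable_gaussianPDFReal _ _).integrableOn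
    measurableSet_Icc fun x hx => ?_
  rw [gaussianPDFReal, Real.coe_toNNReal _ ha.le, one_div]
  gcongr
  rw [neg_div, neg_le_neg_iff]
  rw [sub_zero]
  have := sq_le_sq' hx.1 hx.2
  gcongr ?_ / _

/-! ### Second moment method and overlaps in the cube -/

/-- Chebyshev's inequality for the number `N` of events that occur, in the form
`ℙ(N = 0) · (𝔼N)² ≤ Var N`. -/
theorem second_moment {Ω ι : Type*} [MeasurableSpace Ω] [Fintype ι] (μ : Measure Ω)
    [IsProbabilityMeasure μ] (A : ι → Set Ω) (hA : ∀ i, MeasurableSet (A i)) :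
    μ.real {ω | ∀ i, ω ∉ A i} * (∑ i, μ.real (A i)) ^ 2 ≤
      (∑ i, ∑ j, μ.real (A i ∩ A j)) - (∑ i, μ.real (A i)) ^ 2 := by
  set m := ∑ i, μ.real (A i) with hm
  set N : Ω → ℝ := fun ω => ∑ i, (A i).indicator 1 ω with hN
  have hint : ∀ B : Set Ω, MeasurableSet B → Integrable (B.indicator (1 : Ω → ℝ)) μ := fun B hB =>
    (integrable_const (1 : ℝ)).indicator hB
  have hB : MeasurableSet {ω | ∀ i, ω ∉ A i} := by
    simp only [Set.ofPred_forall]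
    exact MeasurableSet.iInter fun i => (hA i).compl
  have hexp : ∀ ω, (N ω - m) ^ 2 =
      (∑ i, ∑ j, (A i ∩ A j).indicator (1 : Ω → ℝ) ω) - 2 * m * N ω + m ^ 2 := by
    intro ω
    have : N ω ^ 2 = ∑ i, ∑ j, (A i ∩ A j).indicator (1 : Ω → ℝ) ω := by
      simp only [hN, sq, Finset.sum_mul_sum]
      refine Finset.sum_congr rfl fun i _ => Finset.sum_congr rfl fun j _ => ?_
      rw [Set.inter_indicator_one]; rfl
    rw [← this]; ring
  have hNint : Integrable N μ := integrable_finsetSum _ fun i _ => hint _ (hA i)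
  have hSint : Integrable (fun ω => ∑ i, ∑ j, (A i ∩ A j).indicator (1 : Ω → ℝ) ω) μ :=
    integrable_finsetSum _ fun i _ => integrable_finsetSum _ fun j _ => hint _ ((hA i).inter (hA j))
  have hNi : ∫ ω, N ω ∂μ = m := by
    rw [hN, integral_finsetSum _ fun i _ => hint _ (hA i), hm]
    exact Finset.sum_congr rfl fun i _ => integral_indicator_one (hA i)
  have hSi : ∫ ω, (∑ i, ∑ j, (A i ∩ A j).indicator (1 : Ω → ℝ) ω) ∂μ =
      ∑ i, ∑ j, μ.real (A i ∩ A j) := by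
    rw [integral_finsetSum _ fun i _ => integrable_finsetSum _ fun j _ => hint _ ((hA i).inter (hA j))]
    refine Finset.sum_congr rfl fun i _ => ?_
    rw [integral_finsetSum _ fun j _ => hint _ ((hA i).inter (hA j))]
    exact Finset.sum_congr rfl fun j _ => integral_indicator_one ((hA i).inter (hA j))
  have hI1 : Integrable (fun ω => (∑ i, ∑ j, (A i ∩ A j).indicator (1 : Ω → ℝ) ω)
      - 2 * m * N ω) μ := hSint.sub (hNint.const_mul _)
  have hsq : ∫ ω, (N ω - m) ^ 2 ∂μ = (∑ i, ∑ j, μ.real (A i ∩ A j)) - m ^ 2 := by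
    simp_rw [hexp]
    rw [integral_add hI1 (integrable_const _), integral_sub hSint (hNint.const_mul _),
      integral_const_mul, hNi, hSi]
    simp; ring
  rw [← hsq, ← integral_indicator_one hB, ← integral_mul_const]
  refine integral_mono ((hint _ hB).mul_const _) ?_ fun ω => ?_
  · simp_rw [hexp]; exact hI1.add (integrable_const _)
  · by_cases hω : ω ∈ {ω | ∀ i, ω ∉ A i}
    · have : N ω = 0 := Finset.sum_eq_zero fun i _ => Set.indicator_of_notMem (hω i) _
      simp [hω, this]
    · simp only [Set.indicator_of_notMem hω, zero_mul]; positivity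

theorem spin_mul_self {n : ℕ} (s : Fin n → Bool) (i : Fin n) : spin s i * spin s i = 1 := by
  unfold spin; split_ifs <;> norm_num

theorem spin_not {n : ℕ} (s : Fin n → Bool) (i : Fin n) : spin (fun j => !s j) i = -spin s i := by
  cases h : s i <;> simp [spin, h]

theorem spin_eq_or {n : ℕ} (s : Fin n → Bool) (i : Fin n) : spin s i = 1 ∨ spin s i = -1 := by
  unfold spin; split_ifs <;> simp

theorem spin_injective {n : ℕ} : Function.Injective (spin (n := n)) := by
  intro s s' h
  ext i
  have := congrFun h i
  unfold spin at this
  cases hs : s i <;> cases hs' : s' i <;> simp [hs, hs'] at this ⊢ <;> norm_num at this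

theorem sum_spin_mul {n : ℕ} (i j : Fin n) :
    ∑ s : Fin n → Bool, spin s i * spin s j = if i = j then 2 ^ n else 0 := by
  split_ifs with h
  · subst h; simp [spin_mul_self]
  -- flipping the `i`-th sign changes the sign of every term
  · have hinv : Function.Involutive fun s : Fin n → Bool => Function.update s i (!s i) := by
      intro s; simp
    have := Equiv.sum_comp (hinv.toPerm _) fun s : Fin n → Bool => spin s i * spin s j
    have h2 : ∀ s : Fin n → Bool, spin (hinv.toPerm _ s) i * spin (hinv.toPerm _ s) j =
        -(spin s i * spin s j) := by
      intro s
      simp only [Function.Involutive.coe_toPerm, spin, Function.update_self,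
        Function.update_of_ne (Ne.symm h)]
      cases s i <;> cases s j <;> simp
    simp_rw [h2, Finset.sum_neg_distrib] at this
    linarith

/-- The overlap `⟨σ, σ'⟩` with a uniformly random `σ'` has second moment `n`. -/
theorem sum_ip_spin_sq {n : ℕ} (s : Fin n → Bool) :
    ∑ s' : Fin n → Bool, ip (spin s) (spin s') ^ 2 = n * 2 ^ n := by
  have : ∀ s' : Fin n → Bool, ip (spin s) (spin s') ^ 2 =
      ∑ i, ∑ j, (spin s i * spin s j) * (spin s' i * spin s' j) := by
    intro s'
    rw [sq, ip, Finset.sum_mul_sum]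
    exact Finset.sum_congr rfl fun i _ => Finset.sum_congr rfl fun j _ => by ring
  simp_rw [this]
  rw [Finset.sum_comm]
  simp_rw [Finset.sum_comm (s := (Finset.univ : Finset (Fin n → Bool))), ← Finset.mul_sum,
    sum_spin_mul]
  simp [spin_mul_self]

theorem ip_spin_int {n : ℕ} (s s' : Fin n → Bool) : ∃ k : ℤ, ip (spin s) (spin s') = k := by
  refine ⟨∑ i, (if s i then 1 else -1) * (if s' i then 1 else -1), ?_⟩
  unfold ip spin
  push_cast
  rfl

theorem eq_of_ip_spin {n : ℕ} {s s' : Fin n → Bool} (h : ip (spin s) (spin s') = n) : s' = s := by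
  have h0 : ∑ i : Fin n, (1 - spin s i * spin s' i) = 0 := by
    rw [Finset.sum_sub_distrib]; unfold ip at h; simp [h]
  have h1 := (Finset.sum_eq_zero_iff_of_nonneg (fun i _ => by
    rcases spin_eq_or s i with h | h <;> rcases spin_eq_or s' i with h' | h' <;>
      norm_num [h, h'])).1 h0
  apply spin_injective
  ext i
  have := h1 i (Finset.mem_univ i)
  rcases spin_eq_or s i with h | h <;> rcases spin_eq_or s' i with h' | h' <;>
    rw [h, h'] at this ⊢ <;> norm_num at this

theorem eq_not_of_ip_spin {n : ℕ} {s s' : Fin n → Bool} (h : ip (spin s) (spin s') = -n) :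
    s' = fun i => !s i := by
  apply eq_of_ip_spin
  rw [← neg_neg (n : ℝ), ← h]
  unfold ip
  rw [← Finset.sum_neg_distrib]
  exact Finset.sum_congr rfl fun i _ => by rw [spin_not]; ring

/-- For an overlap `k` bounded away from `±n`, the factor `1 / √(1 - (k/n)²)` exceeds `1` by at most a
multiple of `k²`, so that its average over all pairs is controlled by `sum_ip_spin_sq`. -/
theorem inv_sqrt_bound {n k : ℝ} (hn : 1 ≤ n) (hk : n ≤ n ^ 2 - k ^ 2) :
    1 / √(n ^ 2 - k ^ 2) ≤ 1 / n * (1 + k ^ 2 / (n * √n)) := by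
  set w := √(n ^ 2 - k ^ 2) with hw
  have hw2 : w ^ 2 = n ^ 2 - k ^ 2 := Real.sq_sqrt (by linarith)
  have hwn : √n ≤ w := Real.sqrt_le_sqrt hk
  have hn0 : 0 < √n := Real.sqrt_pos.2 (by linarith)
  have hw0 : 0 < w := by linarith
  have h1 : n / w - 1 ≤ k ^ 2 / (n * √n) := by
    have : n / w - 1 = k ^ 2 / ((n + w) * w) := by
      field_simp; linarith
    rw [this]
    gcongr
    linarith
  calc 1 / w = 1 / n * (n / w) := by field_simp
    _ ≤ _ := by gcongr; linarith

/-! ### Existence of a configuration with small inner product -/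

theorem small_prob {n : ℕ} (s : Fin n → Bool) (t : ℝ) :
    (_root_.stdGaussian n).real {X | |ip (spin s) X| ≤ t} =
      (gaussianReal 0 (n : ℝ).toNNReal).real (Set.Icc (-t) t) := by
  have h := map_ip (spin s)
  simp only [spin_mul_self, Finset.sum_const, Finset.card_univ, Fintype.card_fin, nsmul_eq_mul,
    mul_one] at h
  rw [← h, map_measureReal_apply (continuous_ip _).measurable measurableSet_Icc]
  congr 1
  ext X
  simp [abs_le]

/-- Joint smallness of `⟨σ, X⟩` and `⟨σ', X⟩`. With `U = ⟨(σ + σ')/2, X⟩` and `V = ⟨(σ - σ')/2, X⟩`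
the event is `|U| + |V| ≤ t`, and `U`, `V` are independent with variances `(n ± ⟨σ, σ'⟩)/2`. -/
theorem pair_prob {n : ℕ} (s s' : Fin n → Bool) {t : ℝ} (ht : 0 ≤ t)
    (hk : |ip (spin s) (spin s')| < n) :
    (_root_.stdGaussian n).real ({X | |ip (spin s) X| ≤ t} ∩ {X | |ip (spin s') X| ≤ t}) ≤
      2 * t ^ 2 / Real.pi * (1 / √((n : ℝ) ^ 2 - ip (spin s) (spin s') ^ 2)) := by
  set k := ip (spin s) (spin s') with hkdef
  obtain ⟨hk1, hk2⟩ := abs_lt.1 hk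
  set u : Fin n → ℝ := fun i => (spin s i + spin s' i) / 2 with hu
  set v : Fin n → ℝ := fun i => (spin s i - spin s' i) / 2 with hv
  have huv : ∑ i, u i * v i = 0 := Finset.sum_eq_zero fun i _ => by
    have := spin_mul_self s i
    have := spin_mul_self s' i
    simp only [hu, hv]; linarith
  have huu : ∑ i, u i * u i = (n + k) / 2 := by
    have : ∀ i, u i * u i = 1 / 2 + (spin s i * spin s' i) / 2 := fun i => by
      have := spin_mul_self s i
      have := spin_mul_self s' i
      simp only [hu]; linarith
    simp_rw [this, Finset.sum_add_distrib, ← Finset.sum_div, hkdef, ip]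
    simp; ring
  have hvv : ∑ i, v i * v i = (n - k) / 2 := by
    have : ∀ i, v i * v i = 1 / 2 - (spin s i * spin s' i) / 2 := fun i => by
      have := spin_mul_self s i
      have := spin_mul_self s' i
      simp only [hv]; linarith
    simp_rw [this, Finset.sum_sub_distrib, ← Finset.sum_div, hkdef, ip]
    simp; ring
  have hb := gaussian_prod_tent_le (a := (n + k) / 2) (b := (n - k) / 2) (t := t)
    (by linarith) (by linarith) ht
  rw [← huu, ← hvv, ← map_pair u v huv, Measure.map_apply
    ((continuous_ip u).measurable.prodMk (continuous_ip v).measurable)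
    (measurableSet_le (by fun_prop) (by fun_prop)), huu, hvv] at hb
  have hsub : ({X | |ip (spin s) X| ≤ t} ∩ {X | |ip (spin s') X| ≤ t}) ⊆
      ((fun X => (ip u X, ip v X)) ⁻¹' {p : ℝ × ℝ | |p.1| + |p.2| ≤ t}) := by
    rintro X ⟨h1, h2⟩
    have e1 : ip (spin s) X = ip u X + ip v X := by
      simp only [ip, ← Finset.sum_add_distrib, hu, hv]
      exact Finset.sum_congr rfl fun i _ => by ring
    have e2 : ip (spin s') X = ip u X - ip v X := by
      simp only [ip, ← Finset.sum_sub_distrib, hu, hv]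
      exact Finset.sum_congr rfl fun i _ => by ring
    simp only [Set.mem_ofPred_eq, e1, e2, abs_le] at h1 h2
    simp only [Set.mem_preimage, Set.mem_ofPred_eq]
    rcases abs_cases (ip u X) with h | h <;> rcases abs_cases (ip v X) with h' | h' <;> linarith
  have hR : (0:ℝ) ≤ t ^ 2 / (Real.pi * √((n + k) / 2 * ((n - k) / 2))) := by
    have := Real.pi_pos; positivity
  refine (ENNReal.toReal_le_of_le_ofReal hR ((measure_mono hsub).trans hb)).trans (le_of_eq ?_)
  rw [show ((n:ℝ) + k) / 2 * ((n - k) / 2) = (n ^ 2 - k ^ 2) / 2 ^ 2 by ring,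
    Real.sqrt_div' _ (by positivity), Real.sqrt_sq (by norm_num)]
  field_simp

/-- A bound on the joint probability that holds for all pairs; the last two terms account for the
degenerate pairs `σ' = ±σ`. -/
theorem pair_prob_le {n : ℕ} (hn : 1 ≤ n) (s s' : Fin n → Bool) {t : ℝ} (ht : 0 ≤ t) :
    (_root_.stdGaussian n).real ({X | |ip (spin s) X| ≤ t} ∩ {X | |ip (spin s') X| ≤ t}) ≤
      2 * t ^ 2 / (Real.pi * n) * (1 + ip (spin s) (spin s') ^ 2 / (n * √n)) +
      ((if s' = s then (gaussianReal 0 (n : ℝ).toNNReal).real (Set.Icc (-t) t) else 0) +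
       (if s' = fun i => !s i then
        (gaussianReal 0 (n : ℝ).toNNReal).real (Set.Icc (-t) t) else 0)) := by
  set p := (gaussianReal 0 (n : ℝ).toNNReal).real (Set.Icc (-t) t) with hp
  have hp0 : 0 ≤ p := measureReal_nonneg
  have hn' : (1:ℝ) ≤ n := by exact_mod_cast hn
  have hpi := Real.pi_pos
  by_cases hk : |ip (spin s) (spin s')| < n
  · have h1 := pair_prob s s' ht hk
    have h2 : (n:ℝ) ≤ n ^ 2 - ip (spin s) (spin s') ^ 2 := by
      obtain ⟨k, hke⟩ := ip_spin_int s s'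
      rw [hke] at hk ⊢
      have hk1 : |k| + 1 ≤ (n : ℤ) := by
        have : |k| < (n : ℤ) := by exact_mod_cast hk
        omega
      have hk2 : |(k:ℝ)| + 1 ≤ n := by exact_mod_cast hk1
      rw [← sq_abs (k:ℝ)]
      nlinarith [abs_nonneg (k:ℝ)]
    have h3 := inv_sqrt_bound hn' h2
    have h4 : 0 ≤ ((if s' = s then p else 0) + (if s' = fun i => !s i then p else 0)) := by
      positivity
    refine h1.trans ((mul_le_mul_of_nonneg_left h3 (by positivity)).trans ?_)
    rw [show 2 * t ^ 2 / Real.pi * (1 / n * (1 + ip (spin s) (spin s') ^ 2 / (n * √n))) =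
      2 * t ^ 2 / (Real.pi * n) * (1 + ip (spin s) (spin s') ^ 2 / (n * √n)) by field_simp]
    linarith
  · have h1 : (_root_.stdGaussian n).real
        ({X | |ip (spin s) X| ≤ t} ∩ {X | |ip (spin s') X| ≤ t}) ≤ p := by
      rw [hp, ← small_prob s t]
      exact measureReal_mono Set.inter_subset_left
    have h2 : 0 ≤ 2 * t ^ 2 / (Real.pi * n) * (1 + ip (spin s) (spin s') ^ 2 / (n * √n)) := by
      positivity
    have h3 : s' = s ∨ s' = fun i => !s i := by
      have hle : |ip (spin s) (spin s')| ≤ n := by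
        unfold ip
        refine (Finset.abs_sum_le_sum_abs _ _).trans ?_
        have : ∀ i, |spin s i * spin s' i| = 1 := fun i => by
          rcases spin_eq_or s i with h | h <;> rcases spin_eq_or s' i with h' | h' <;>
            simp [h, h']
        simp [this]
      have heq : |ip (spin s) (spin s')| = n := le_antisymm hle (not_lt.1 hk)
      rcases (abs_eq (by positivity)).1 heq with h | h
      · exact Or.inl (eq_of_ip_spin h)
      · exact Or.inr (eq_not_of_ip_spin h)
    rcases h3 with h | h
    · rw [if_pos h]; have : 0 ≤ (if s' = fun i => !s i then p else 0) := by positivity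
      linarith
    · rw [if_pos h]; have : 0 ≤ (if s' = s then p else 0) := by positivity
      linarith

/-- Second moment bound on the probability that no `σ` in the cube has `|⟨σ, X⟩| ≤ t`. -/
theorem no_small_prob {n : ℕ} (hn : 1 ≤ n) {t : ℝ} (ht : 0 < t) :
    (_root_.stdGaussian n).real {X | ∀ s : Fin n → Bool, t < |ip (spin s) X|} ≤
      Real.exp (t ^ 2 / n) * (1 + 1 / √n) - 1 +
        2 * (√(2 * Real.pi * n) / (2 * t) * Real.exp (t ^ 2 / (2 * n))) / 2 ^ n := by
  have hn' : (1:ℝ) ≤ n := by exact_mod_cast hn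
  have hpi := Real.pi_pos
  have h2 := second_moment (_root_.stdGaussian n)
    (fun s : Fin n → Bool => {X | |ip (spin s) X| ≤ t})
    (fun s => measurableSet_le (continuous_ip _).abs.measurable measurable_const)
  simp_rw [small_prob] at h2
  set p := (gaussianReal 0 (n : ℝ).toNNReal).real (Set.Icc (-t) t) with hp
  set q := 2 * t ^ 2 / (Real.pi * n) with hq
  have hpl : 2 * t / √(2 * Real.pi * n) * Real.exp (-(t ^ 2 / (2 * n))) ≤ p :=
    gaussianReal_Icc_ge (by linarith) ht.le
  set x := 2 * t / √(2 * Real.pi * n) * Real.exp (-(t ^ 2 / (2 * n))) with hx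
  have hx0 : 0 < x := by positivity
  have hp0 : 0 < p := hx0.trans_le hpl
  have hxq : x ^ 2 = q * Real.exp (-(t ^ 2 / n)) := by
    rw [hx, mul_pow, div_pow, Real.sq_sqrt (by positivity), ← Real.exp_nat_mul, hq]
    congr 1
    · field_simp
    · congr 1; push_cast; field_simp
  have hqp : q ≤ Real.exp (t ^ 2 / n) * p ^ 2 := by
    have : q = Real.exp (t ^ 2 / n) * x ^ 2 := by
      rw [hxq, mul_left_comm, ← Real.exp_add]; simp
    rw [this]
    gcongr
  have hip : 1 / p ≤ √(2 * Real.pi * n) / (2 * t) * Real.exp (t ^ 2 / (2 * n)) := by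
    refine (one_div_le_one_div_of_le hx0 hpl).trans (le_of_eq ?_)
    rw [hx, Real.exp_neg]; field_simp
  have hsum : ∑ s : Fin n → Bool, ∑ s' : Fin n → Bool,
      (_root_.stdGaussian n).real ({X | |ip (spin s) X| ≤ t} ∩ {X | |ip (spin s') X| ≤ t}) ≤
      2 ^ n * (2 ^ n * (q * (1 + 1 / √n)) + 2 * p) := by
    have hone : ∀ s : Fin n → Bool, ∑ s' : Fin n → Bool,
      (_root_.stdGaussian n).real ({X | |ip (spin s) X| ≤ t} ∩ {X | |ip (spin s') X| ≤ t}) ≤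
        2 ^ n * (q * (1 + 1 / √n)) + 2 * p := by
      intro s
      refine (Finset.sum_le_sum fun s' _ => pair_prob_le hn s s' ht.le).trans (le_of_eq ?_)
      rw [Finset.sum_add_distrib, Finset.sum_add_distrib, ← Finset.mul_sum,
        Finset.sum_add_distrib, ← Finset.sum_div, sum_ip_spin_sq]
      rw [← hq, ← hp]
      simp only [Finset.sum_ite_eq', Finset.mem_univ, if_true, Finset.sum_const, Finset.card_univ,
        Fintype.card_pi, Fintype.card_bool, Finset.prod_const, Fintype.card_fin, nsmul_eq_mul,
        Nat.cast_pow, Nat.cast_ofNat]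
      field_simp
      ring
    refine (Finset.sum_le_sum fun s _ => hone s).trans (le_of_eq ?_)
    simp [mul_add]
  have hm : ∑ s : Fin n → Bool, p = 2 ^ n * p := by simp
  rw [hm] at h2
  set B := (_root_.stdGaussian n).real {X | ∀ s : Fin n → Bool, t < |ip (spin s) X|} with hB
  have hBe : (_root_.stdGaussian n).real
      {ω | ∀ i : Fin n → Bool, ω ∉ {X | |ip (spin i) X| ≤ t}} = B := by
    rw [hB]; congr 1; ext X; simp
  rw [hBe] at h2
  have h3 : B * (2 ^ n * p) ^ 2 ≤ 2 ^ n * (2 ^ n *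
      (Real.exp (t ^ 2 / n) * p ^ 2 * (1 + 1 / √n)) + 2 * p) - (2 ^ n * p) ^ 2 := by
    refine h2.trans (sub_le_sub_right (hsum.trans ?_) _)
    gcongr
  have h4 : B ≤ Real.exp (t ^ 2 / n) * (1 + 1 / √n) - 1 + 2 * (1 / p) / 2 ^ n := by
    have hpos : 0 < (2 ^ n * p) ^ 2 := by positivity
    refine (le_div_iff₀ hpos).2 h3 |>.trans (le_of_eq ?_)
    field_simp
    ring
  refine h4.trans ?_
  gcongr

/-! ### Reversible chains -/

section Chain

variable {S : Type*} [Fintype S] [MeasurableSpace S] [MeasurableSingletonClass S]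
  {P : Measure (ℕ → S)} {Q : S → S → ℝ} {start ν : S → ℝ}

/-- The Markov property for two consecutive times, derived from the path probabilities. -/
theorem chain_step (hQ : ∀ s s', 0 ≤ Q s s')
    (hP : ∀ (T : ℕ) (path : ℕ → S), P {ω | ∀ t ≤ T, ω t = path t} =
      ENNReal.ofReal (start (path 0) * ∏ t ∈ Finset.range T, Q (path t) (path (t + 1))))
    (T : ℕ) (s s' : S) :
    P ({ω | ω T = s} ∩ {ω | ω (T + 1) = s'}) = P {ω | ω T = s} * ENNReal.ofReal (Q s s') := by
  classical
  set f : (ℕ → S) → (Fin (T + 1) → S) := fun ω i => ω i with hf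
  have hfm : Measurable f := by fun_prop
  set F : Finset (Fin (T + 1) → S) := Finset.univ.filter fun p => p (Fin.last T) = s with hF
  have hpre : f ⁻¹' (F : Set (Fin (T + 1) → S)) = {ω | ω T = s} := by
    ext ω; simp [hF, hf]
  have h1 := sum_measure_preimage_singleton (μ := P) F (f := f) fun p _ => hfm (measurableSet_singleton p)
  have h2 := sum_measure_preimage_singleton (μ := P.restrict {ω | ω (T + 1) = s'}) F (f := f)
    fun p _ => hfm (measurableSet_singleton p)
  rw [Measure.restrict_apply (hfm F.measurableSet), hpre] at h2
  rw [hpre] at h1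
  rw [← h1, ← h2, Finset.sum_mul]
  refine Finset.sum_congr rfl fun p hp => ?_
  rw [Measure.restrict_apply (hfm (measurableSet_singleton p))]
  -- the path that follows `p` up to time `T` and then sits at `s'`
  set g : ℕ → S := fun k => if h : k < T + 1 then p ⟨k, h⟩ else s' with hg
  have hgT : g T = s := by
    have : p (Fin.last T) = s := by simpa [hF] using hp
    simpa [hg, Fin.last] using this
  have hgT1 : g (T + 1) = s' := by simp [hg]
  have e1 : f ⁻¹' {p} = {ω | ∀ t ≤ T, ω t = g t} := by
    ext ω
    simp only [Set.mem_preimage, Set.mem_singleton_iff, Set.mem_ofPred_eq, hf, funext_iff]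
    constructor
    · intro h t ht
      simpa [hg, ht] using h ⟨t, Nat.lt_succ_of_le ht⟩
    · intro h i
      simpa [hg, Nat.le_of_lt_succ i.2] using h i (Nat.le_of_lt_succ i.2)
  have e2 : f ⁻¹' {p} ∩ {ω | ω (T + 1) = s'} = {ω | ∀ t ≤ T + 1, ω t = g t} := by
    rw [e1]
    ext ω
    simp only [Set.mem_inter_iff, Set.mem_ofPred_eq]
    constructor
    · rintro ⟨h, h'⟩ t ht
      rcases Nat.le_succ_iff.1 ht with h'' | h''
      · exact h t h''
      · rw [h'', hgT1]; exact h'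
    · intro h
      exact ⟨fun t ht => h t (by omega), by rw [h _ le_rfl, hgT1]⟩
  rw [e2, e1, hP, hP, Finset.prod_range_succ, hgT, hgT1, ← mul_assoc, ENNReal.ofReal_mul' (hQ _ _)]

/-- If the initial law is dominated by a reversible (not necessarily normalized) measure `ν`, then so is
the law at every time. -/
theorem chain_marginal [IsProbabilityMeasure P] (hQ : ∀ s s', 0 ≤ Q s s')
    (hQ1 : ∀ s, ∑ s', Q s s' = 1)
    (hν : ∀ s, 0 ≤ ν s) (hdb : ∀ s s', ν s * Q s s' = ν s' * Q s' s) (hstart : ∀ s, start s ≤ ν s)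
    (hP : ∀ (T : ℕ) (path : ℕ → S), P {ω | ∀ t ≤ T, ω t = path t} =
      ENNReal.ofReal (start (path 0) * ∏ t ∈ Finset.range T, Q (path t) (path (t + 1))))
    (T : ℕ) (s : S) : P {ω | ω T = s} ≤ ENNReal.ofReal (ν s) := by
  induction T generalizing s with
  | zero =>
    have := hP 0 fun _ => s
    simp only [nonpos_iff_eq_zero, forall_eq, Finset.range_zero, Finset.prod_empty, mul_one] at this
    rw [this]
    exact ENNReal.ofReal_le_ofReal (hstart s)
  | succ T ih =>
    have hcov : {ω : ℕ → S | ω (T + 1) = s} ⊆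
        ⋃ r ∈ (Finset.univ : Finset S), ({ω | ω T = r} ∩ {ω | ω (T + 1) = s}) := by
      intro ω hω
      simpa using hω
    calc P {ω | ω (T + 1) = s} ≤ ∑ r, P ({ω | ω T = r} ∩ {ω | ω (T + 1) = s}) :=
          (measure_mono hcov).trans (measure_biUnion_finset_le _ _)
      _ ≤ ∑ r, ENNReal.ofReal (ν s * Q s r) := by
          refine Finset.sum_le_sum fun r _ => ?_
          rw [chain_step hQ hP, hdb s r, ENNReal.ofReal_mul (hν r)]
          gcongr
          exact ih r
      _ = ENNReal.ofReal (ν s) := by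
          rw [← ENNReal.ofReal_sum_of_nonneg fun r _ => mul_nonneg (hν s) (hQ s r),
            ← Finset.mul_sum, hQ1, mul_one]

/-- If the centre `c` of `W` has no direct transition out of `W`, then every exit from `W` happens from a
state of `W` other than `c`, and at each time such a state `s` is occupied with probability at most
`ν s ≤ M`. -/
theorem chain_escape [IsProbabilityMeasure P] (hQ : ∀ s s', 0 ≤ Q s s')
    (hQ1 : ∀ s, ∑ s', Q s s' = 1)
    (hν : ∀ s, 0 ≤ ν s) (hdb : ∀ s s', ν s * Q s s' = ν s' * Q s' s) (hstart : ∀ s, start s ≤ ν s)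
    (hP : ∀ (T : ℕ) (path : ℕ → S), P {ω | ∀ t ≤ T, ω t = path t} =
      ENNReal.ofReal (start (path 0) * ∏ t ∈ Finset.range T, Q (path t) (path (t + 1))))
    (W : S → Prop) (c : S) (hc : ∀ s, ¬ W s → Q c s = 0) (hW : ∀ s, ¬ W s → start s = 0)
    {M : ℝ} (hM : ∀ s, W s → s ≠ c → ν s ≤ M) (T : ℕ) :
    P {ω | ∃ t ≤ T, ¬ W (ω t)} ≤ ENNReal.ofReal (T * (Fintype.card S * M)) := by
  classical
  have hstep : ∀ t, P {ω | W (ω t) ∧ ¬ W (ω (t + 1))} ≤ ENNReal.ofReal (Fintype.card S * M) := by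
    intro t
    have hcov : {ω : ℕ → S | W (ω t) ∧ ¬ W (ω (t + 1))} ⊆
        (⋃ r ∈ Finset.univ.filter (fun r => ¬ W r), ({ω | ω t = c} ∩ {ω | ω (t + 1) = r})) ∪
        ⋃ r ∈ Finset.univ.filter (fun r => W r ∧ r ≠ c), {ω | ω t = r} := by
      rintro ω ⟨h1, h2⟩
      by_cases h : ω t = c
      · left; simpa [h] using h2
      · right; simpa [h] using h1
    have hz : P (⋃ r ∈ Finset.univ.filter (fun r => ¬ W r),
        ({ω | ω t = c} ∩ {ω | ω (t + 1) = r})) = 0 := by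
      refine (measure_biUnion_null_iff (Finset.countable_toSet _)).2 fun r hr => ?_
      rw [chain_step hQ hP, hc r (by simpa using hr)]
      simp
    refine (measure_mono hcov).trans ((measure_union_le _ _).trans ?_)
    rw [hz, zero_add]
    refine (measure_biUnion_finset_le _ _).trans ?_
    calc _ ≤ ∑ r ∈ Finset.univ.filter (fun r => W r ∧ r ≠ c), ENNReal.ofReal M := by
          refine Finset.sum_le_sum fun r hr => ?_
          simp only [Finset.mem_filter, Finset.mem_univ, true_and] at hr
          exact (chain_marginal hQ hQ1 hν hdb hstart hP t r).trans
            (ENNReal.ofReal_le_ofReal (hM r hr.1 hr.2))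
      _ ≤ ∑ r : S, ENNReal.ofReal M := Finset.sum_le_sum_of_subset (Finset.filter_subset _ _)
      _ = _ := by
          rw [Finset.sum_const, Finset.card_univ, nsmul_eq_mul, ENNReal.ofReal_mul (by positivity),
            ENNReal.ofReal_natCast]
  induction T with
  | zero =>
    have hcov : {ω : ℕ → S | ∃ t ≤ 0, ¬ W (ω t)} ⊆
        ⋃ r ∈ Finset.univ.filter (fun r => ¬ W r), {ω | ω 0 = r} := by
      intro ω hω; simpa using hω
    have hz : P (⋃ r ∈ Finset.univ.filter (fun r => ¬ W r), {ω | ω 0 = r}) = 0 := by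
      refine (measure_biUnion_null_iff (Finset.countable_toSet _)).2 fun r hr => ?_
      have := hP 0 fun _ => r
      simp only [nonpos_iff_eq_zero, forall_eq, Finset.range_zero, Finset.prod_empty, mul_one] at this
      rw [this, hW r (by simpa using hr)]
      simp
    exact ((measure_mono hcov).trans hz.le).trans zero_le
  | succ T ih =>
    have hcov : {ω : ℕ → S | ∃ t ≤ T + 1, ¬ W (ω t)} ⊆
        {ω | ∃ t ≤ T, ¬ W (ω t)} ∪ {ω | W (ω T) ∧ ¬ W (ω (T + 1))} := by
      rintro ω ⟨t, ht, hω⟩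
      by_cases h : ∃ t ≤ T, ¬ W (ω t)
      · exact Or.inl h
      · push Not at h
        have : t = T + 1 := by
          by_contra hne
          exact hω (h t (by omega))
        exact Or.inr ⟨h T le_rfl, this ▸ hω⟩
    refine (measure_mono hcov).trans ((measure_union_le _ _).trans ((add_le_add ih (hstep T)).trans ?_))
    rcases le_total 0 M with hM0 | hM0
    · rw [← ENNReal.ofReal_add (by positivity) (by positivity)]
      exact ENNReal.ofReal_le_ofReal (by push_cast; linarith)
    · rw [ENNReal.ofReal_of_nonpos (mul_nonpos_of_nonneg_of_nonpos (by positivity)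
        (mul_nonpos_of_nonneg_of_nonpos (by positivity) hM0)),
        ENNReal.ofReal_of_nonpos (mul_nonpos_of_nonneg_of_nonpos (by positivity) hM0)]
      simp

end Chain

/-! ### Energy gap around the ground state and escape on the good event -/

theorem hdist_comm_fin {n : ℕ} (x y : Fin n → ℝ) : hdist x y = hdist y x := by
  unfold hdist; simp_rw [ne_comm]

theorem eq_of_hdist_eq_zero {n : ℕ} {x y : Fin n → ℝ} (h : hdist x y = 0) : x = y := by
  unfold hdist at h
  ext i
  by_contra hi
  have := (Finset.card_eq_zero.1 h).symm ▸ Finset.mem_filter.2 ⟨Finset.mem_univ i, hi⟩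
  simp at this

theorem exists_spin_eq {n : ℕ} {σ : Fin n → ℝ} (h : isCube σ) : ∃ s, spin s = σ := by
  classical
  refine ⟨fun i => decide (σ i = 1), funext fun i => ?_⟩
  rcases h i with h | h
  · simp [spin, h]
  · simp only [spin, h]; norm_num

/-- Flipping the sign at `i` changes `⟨σ, X⟩` by `2|X i|`. -/
theorem ip_of_hdist_one {n : ℕ} (s : Fin n → Bool) {σ : Fin n → ℝ} (hσ : isCube σ)
    (h : hdist (spin s) σ = 1) (X : Fin n → ℝ) :
    ∃ i, 2 * |X i| - |ip σ X| ≤ |ip (spin s) X| := by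
  classical
  obtain ⟨i, hi⟩ := Finset.card_eq_one.1 h
  have hmem : ∀ j, spin s j ≠ σ j ↔ j = i := fun j => by
    have := congrArg (j ∈ ·) hi
    simpa using this
  refine ⟨i, ?_⟩
  have hdiff : ip σ X - ip (spin s) X = 2 * (σ i * X i) := by
    unfold ip
    rw [← Finset.sum_sub_distrib, Finset.sum_eq_single i]
    · have h1 := (hmem i).2 rfl
      rcases spin_eq_or s i with h | h <;> rcases hσ i with h' | h' <;> rw [h, h'] at h1 ⊢ <;>
        first | exact absurd rfl h1 | ring
    · intro j _ hj
      have : spin s j = σ j := by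
        by_contra hne
        exact hj ((hmem j).1 hne)
      rw [this]; ring
    · simp
  have habs : |ip σ X - ip (spin s) X| = 2 * |X i| := by
    rw [hdiff, abs_mul, abs_mul]
    rcases hσ i with h | h <;> simp [h]
  have := abs_sub (ip σ X) (ip (spin s) X)
  linarith

/-- On the good event every neighbour of the ground state has energy larger by at least `n^{-5/2}`. -/
theorem gibbs_ratio {n : ℕ} (hn : 1 ≤ n) {b : ℝ} (hb : 0 ≤ b) {X σ : Fin n → ℝ}
    (hσ : isCube σ) (hX : ∀ i, 1 / (n : ℝ) ^ 2 < |X i|) (hs : |ip σ X| ≤ 1 / (2 * (n : ℝ) ^ 2))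
    (c s : Fin n → Bool) (hc : spin c = σ) (h : hdist (spin s) σ = 1) :
    gibbsWeight n b X s / gibbsWeight n b X c ≤ Real.exp (-b * (1 / ((n : ℝ) ^ 2 * √n))) := by
  have hn' : (1:ℝ) ≤ n := by exact_mod_cast hn
  obtain ⟨i, hi⟩ := ip_of_hdist_one s hσ h X
  have hXi := hX i
  have hgap : 1 / (n : ℝ) ^ 2 ≤ |ip (spin s) X| - |ip σ X| := by
    have : 1 / (2 * (n : ℝ) ^ 2) = 1 / (n:ℝ) ^ 2 / 2 := by field_simp
    linarith
  have hgap' : 1 / ((n : ℝ) ^ 2 * √n) ≤ |ip (spin s) X| / √n - |ip σ X| / √n := by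
    rw [← sub_div, ← div_div]
    gcongr
  unfold gibbsWeight
  rw [← Real.exp_sub, hc]
  refine Real.exp_le_exp.2 ?_
  nlinarith [mul_le_mul_of_nonneg_left hgap' hb]

theorem escape_of_good {n : ℕ} (hn : 1 ≤ n) {b : ℝ} (hb : 0 ≤ b) {X σ : Fin n → ℝ}
    (hσ : isCube σ) (hX : ∀ i, 1 / (n : ℝ) ^ 2 < |X i|) (hs : |ip σ X| ≤ 1 / (2 * (n : ℝ) ^ 2))
    (Q : (Fin n → Bool) → (Fin n → Bool) → ℝ) (P : Measure (ℕ → (Fin n → Bool)))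
    [IsProbabilityMeasure P] (hQ : ∀ s s', 0 ≤ Q s s') (hQ1 : ∀ s, ∑ s', Q s s' = 1)
    (hnn : ∀ s s', 0 < Q s s' → hdist (spin s) (spin s') ≤ 1)
    (hdb : ∀ s s', gibbsWeight n b X s * Q s s' = gibbsWeight n b X s' * Q s' s)
    (hP : ∀ T : ℕ, ∀ path : ℕ → (Fin n → Bool), P {ω | ∀ t ≤ T, ω t = path t} =
      ENNReal.ofReal (initDist n b X σ (path 0) *
        ∏ t ∈ Finset.range T, Q (path t) (path (t + 1)))) (T : ℕ) :
    P {ω | ∃ t ≤ T, ¬ inWell σ (ω t)} ≤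
      ENNReal.ofReal (T * (2 ^ n * Real.exp (-b * (1 / ((n : ℝ) ^ 2 * √n))))) := by
  classical
  obtain ⟨c, hc⟩ := exists_spin_eq hσ
  have hw : ∀ s, 0 < gibbsWeight n b X s := fun s => Real.exp_pos _
  obtain ⟨Z, hZ⟩ : ∃ Z, Z = ∑ s' : Fin n → Bool, if inWell σ s' then gibbsWeight n b X s' else 0 :=
    ⟨_, rfl⟩
  have hterm : ∀ s' : Fin n → Bool, 0 ≤ if inWell σ s' then gibbsWeight n b X s' else 0 := by
    intro s'; split_ifs
    · exact (hw s').le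
    · exact le_rfl
  have hZc : gibbsWeight n b X c ≤ Z := by
    have := Finset.single_le_sum (fun s' _ => hterm s') (Finset.mem_univ c)
    rw [if_pos (show inWell σ c from Or.inl hc)] at this
    rw [hZ]; exact this
  have hZ0 : 0 < Z := (hw c).trans_le hZc
  have hstart : ∀ s, initDist n b X σ s = if inWell σ s then gibbsWeight n b X s / Z else 0 := by
    intro s
    unfold initDist
    rw [hZ]
  have key := chain_escape (P := P) (Q := Q) (start := initDist n b X σ)
    (ν := fun s => gibbsWeight n b X s / Z) hQ hQ1 (fun s => (div_pos (hw s) hZ0).le)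
    (fun s s' => by
      rw [div_mul_eq_mul_div, div_mul_eq_mul_div, hdb])
    (fun s => by
      rw [hstart]; split_ifs
      · exact le_rfl
      · exact (div_pos (hw s) hZ0).le)
    hP (inWell σ) c ?_ (fun s h => by rw [hstart, if_neg h])
    (M := Real.exp (-b * (1 / ((n : ℝ) ^ 2 * √n)))) ?_ T
  · simpa using key
  · intro s h
    by_contra hne
    have h1 := hnn c s (lt_of_le_of_ne (hQ c s) (Ne.symm hne))
    rw [hdist_comm_fin, hc] at h1
    rcases Nat.le_one_iff_eq_zero_or_eq_one.1 h1 with h2 | h2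
    · exact h (Or.inl (eq_of_hdist_eq_zero h2))
    · exact h (Or.inr h2)
  · intro s h hne
    rcases h with h | h
    · exact absurd (spin_injective (h.trans hc.symm)) hne
    · exact (div_le_div_of_nonneg_left (hw s).le (hw c) hZc).trans
        (gibbs_ratio hn hb hσ hX hs c s hc h)

/-- The typical instances: no coordinate is smaller than `n^{-2}` in absolute value, while some
configuration has `|⟨σ, X⟩| ≤ n^{-2} / 2`. -/
def goodSet (n : ℕ) : Set (Fin n → ℝ) :=
  {X | (∀ i, 1 / (n : ℝ) ^ 2 < |X i|) ∧
    ∃ s : Fin n → Bool, |ip (spin s) X| ≤ 1 / (2 * (n : ℝ) ^ 2)}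

theorem measurableSet_goodSet (n : ℕ) : MeasurableSet (goodSet n) := by
  have h1 : ∀ i : Fin n, MeasurableSet {X : Fin n → ℝ | 1 / (n : ℝ) ^ 2 < |X i|} := fun i =>
    measurableSet_lt measurable_const (measurable_pi_apply i).abs
  have h2 : ∀ s : Fin n → Bool,
      MeasurableSet {X : Fin n → ℝ | |ip (spin s) X| ≤ 1 / (2 * (n : ℝ) ^ 2)} := fun s =>
    measurableSet_le (continuous_ip _).abs.measurable measurable_const
  convert (MeasurableSet.iInter h1).inter (MeasurableSet.iUnion h2) using 1
  ext X
  simp [goodSet]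

theorem coord_prob {n : ℕ} (i : Fin n) {η : ℝ} (hη : 0 ≤ η) :
    (_root_.stdGaussian n).real {X | |X i| ≤ η} ≤ η := by
  have h1 : (_root_.stdGaussian n).real {X | |X i| ≤ η} =
      (gaussianReal 0 (1 : ℝ).toNNReal).real (Set.Icc (-η) η) := by
    rw [Real.toNNReal_one, ← (hasLaw_coord i).map_eq,
      map_measureReal_apply (measurable_pi_apply i) measurableSet_Icc]
    congr 1; ext X; simp [abs_le]
  rw [h1]
  refine ENNReal.toReal_le_of_le_ofReal hη ((gaussianReal_le_volume one_pos _).trans ?_)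
  rw [Measure.smul_apply, Real.volume_Icc, smul_eq_mul, ← ENNReal.ofReal_mul (by positivity)]
  refine ENNReal.ofReal_le_ofReal ?_
  have h2 : 2 ≤ √(2 * Real.pi * 1) := by
    rw [show (2:ℝ) = √(2 ^ 2) by rw [Real.sqrt_sq (by norm_num)]]
    refine Real.sqrt_le_sqrt ?_
    rw [Real.sqrt_sq (by norm_num)]
    linarith [Real.pi_gt_three]
  have h3 : 1 / √(2 * Real.pi * 1) ≤ 1 / 2 := one_div_le_one_div_of_le two_pos h2
  nlinarith

theorem goodSet_compl_prob {n : ℕ} (hn : 1 ≤ n) :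
    (_root_.stdGaussian n).real (goodSet n)ᶜ ≤
      1 / n + (Real.exp (1 / n) * (1 + 1 / √n) - 1 + 6 * ((n : ℝ) ^ 3 / 2 ^ n) * Real.exp (1 / n)) := by
  have hn' : (1:ℝ) ≤ n := by exact_mod_cast hn
  have hsub : (goodSet n)ᶜ ⊆ (⋃ i ∈ (Finset.univ : Finset (Fin n)), {X | |X i| ≤ 1 / (n : ℝ) ^ 2}) ∪
      {X | ∀ s : Fin n → Bool, 1 / (2 * (n : ℝ) ^ 2) < |ip (spin s) X|} := by
    intro X hX
    by_cases h : ∀ i, 1 / (n : ℝ) ^ 2 < |X i|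
    · right
      intro s
      by_contra hs
      exact hX ⟨h, s, not_lt.1 hs⟩
    · left
      push Not at h
      simpa using h
  refine (measureReal_mono hsub).trans ((measureReal_union_le _ _).trans (add_le_add ?_ ?_))
  · refine (measureReal_biUnion_finset_le _ _).trans
      ((Finset.sum_le_sum fun i _ => coord_prob i (by positivity)).trans (le_of_eq ?_))
    simp only [Finset.sum_const, Finset.card_univ, Fintype.card_fin, nsmul_eq_mul]
    field_simp
  · refine (no_small_prob hn (by positivity)).trans ?_
    set t : ℝ := 1 / (2 * (n : ℝ) ^ 2) with ht
    have ht1 : t ≤ 1 := by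
      rw [ht, div_le_one (by positivity)]; nlinarith
    have ht0 : 0 < t := by positivity
    have ht2 : t ^ 2 ≤ 1 := by nlinarith
    have e1 : t ^ 2 / n ≤ 1 / n := by gcongr
    have e2 : t ^ 2 / (2 * n) ≤ 1 / n := by gcongr; linarith
    have e3 : √(2 * Real.pi * n) ≤ 3 * n := by
      rw [Real.sqrt_le_left (by positivity)]
      nlinarith [Real.pi_lt_four]
    have e4 : √(2 * Real.pi * n) / (2 * t) ≤ 3 * (n:ℝ) ^ 3 := by
      rw [div_le_iff₀ (by positivity), ht]
      refine e3.trans (le_of_eq ?_)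
      field_simp
    gcongr ?_ * _ - 1 + ?_
    · exact Real.exp_le_exp.2 e1
    · calc 2 * (√(2 * Real.pi * n) / (2 * t) * Real.exp (t ^ 2 / (2 * n))) / 2 ^ n
          ≤ 2 * (3 * (n:ℝ) ^ 3 * Real.exp (1 / n)) / 2 ^ n := by
            gcongr
        _ = _ := by ring

theorem tendsto_goodSet :
    Tendsto (fun n : ℕ => _root_.stdGaussian n (goodSet n)) atTop (nhds 1) := by
  have h1 : Tendsto (fun n : ℕ => (1 : ℝ) / n) atTop (nhds 0) := tendsto_one_div_atTop_nhds_zero_nat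
  have h2 : Tendsto (fun n : ℕ => Real.exp (1 / n)) atTop (nhds 1) := by
    simpa [Function.comp_def] using (Real.continuous_exp.tendsto 0).comp h1
  have h3 : Tendsto (fun n : ℕ => 1 / √(n : ℝ)) atTop (nhds 0) := by
    have := (Real.continuous_sqrt.tendsto 0).comp h1
    simpa [Function.comp_def] using this
  have h4 : Tendsto (fun n : ℕ => (n : ℝ) ^ 3 / 2 ^ n) atTop (nhds 0) :=
    tendsto_pow_const_div_const_pow_of_one_lt 3 one_lt_two
  have hb : Tendsto (fun n : ℕ => 1 / (n:ℝ) + (Real.exp (1 / n) * (1 + 1 / √n) - 1 +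
      6 * ((n : ℝ) ^ 3 / 2 ^ n) * Real.exp (1 / n))) atTop (nhds 0) := by
    have := h1.add (((h2.mul (h3.const_add 1)).sub_const 1).add ((h4.const_mul 6).mul h2))
    simpa using this
  have hc : Tendsto (fun n : ℕ => (_root_.stdGaussian n).real (goodSet n)ᶜ) atTop (nhds 0) :=
    tendsto_of_tendsto_of_tendsto_of_le_of_le' tendsto_const_nhds hb
      (Eventually.of_forall fun n => measureReal_nonneg)
      ((eventually_ge_atTop 1).mono fun n hn => goodSet_compl_prob hn)
  have hd : Tendsto (fun n : ℕ => ENNReal.ofReal (1 - (_root_.stdGaussian n).real (goodSet n)ᶜ))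
      atTop (nhds 1) := by
    have := ENNReal.tendsto_ofReal (hc.const_sub 1)
    simpa using this
  refine hd.congr fun n => ?_
  rw [probReal_compl_eq_one_sub (measurableSet_goodSet n), sub_sub_cancel, ofReal_measureReal]

/-- Since `β_n 2^{-nε} ≥ n` and `n^{-5/2} ≥ 2 · 2^{-nε}` for large `n`, half of the exponent absorbs the
factor `2^n ≤ e^n`. -/
theorem eventually_weight_le {ε : ℝ} (hε : 1 / 2 < ε) {β : ℕ → ℝ}
    (hβ : ∀ n : ℕ, (n : ℝ) * (2 : ℝ) ^ ((n : ℝ) * ε) ≤ β n) :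
    ∀ᶠ n : ℕ in atTop, 2 ^ n * Real.exp (-β n * (1 / ((n : ℝ) ^ 2 * √n))) ≤
      Real.exp (-1 * β n * (2 : ℝ) ^ (-(n : ℝ) * ε)) := by
  have hr : (2:ℝ) ^ (-ε) < 1 := Real.rpow_lt_one_of_one_lt_of_neg one_lt_two (by linarith)
  have hlim := tendsto_pow_const_mul_const_pow_of_lt_one 3
    (Real.rpow_nonneg zero_le_two (-ε)) hr
  filter_upwards [hlim.eventually (ge_mem_nhds (show (0:ℝ) < 1 / 2 by norm_num)),
    eventually_ge_atTop 1] with n hn hn1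
  have hn' : (1:ℝ) ≤ n := by exact_mod_cast hn1
  have hx : (2 : ℝ) ^ (-(n : ℝ) * ε) = ((2:ℝ) ^ (-ε)) ^ n := by
    rw [← Real.rpow_mul_natCast zero_le_two]; congr 1; ring
  rw [← hx] at hn
  set x := (2 : ℝ) ^ (-(n : ℝ) * ε) with hxdef
  have hx0 : 0 < x := Real.rpow_pos_of_pos two_pos _
  have hxinv : (2 : ℝ) ^ ((n : ℝ) * ε) * x = 1 := by
    rw [hxdef, ← Real.rpow_add two_pos]; simp
  have hbx : (n:ℝ) ≤ β n * x := by
    have := mul_le_mul_of_nonneg_right (hβ n) hx0.le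
    rwa [mul_assoc, hxinv, mul_one] at this
  have hb0 : 0 ≤ β n := (by positivity : (0:ℝ) ≤ n * 2 ^ ((n : ℝ) * ε)).trans (hβ n)
  have hgap : 2 * x ≤ 1 / ((n : ℝ) ^ 2 * √n) := by
    have h1 : 2 * x ≤ 1 / (n:ℝ) ^ 3 := by
      rw [le_div_iff₀ (by positivity)]; linarith
    refine h1.trans (one_div_le_one_div_of_le (by positivity) ?_)
    rw [pow_succ (n : ℝ) 2]
    gcongr
    rw [Real.sqrt_le_left (by positivity)]
    nlinarith
  have h2 : (2:ℝ) ^ n ≤ Real.exp n := by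
    rw [← Real.exp_one_pow]
    gcongr
    linarith [Real.add_one_le_exp 1]
  calc (2:ℝ) ^ n * Real.exp (-β n * (1 / ((n : ℝ) ^ 2 * √n)))
      ≤ Real.exp n * Real.exp (-β n * (1 / ((n : ℝ) ^ 2 * √n))) := by gcongr
    _ = Real.exp (n + -β n * (1 / ((n : ℝ) ^ 2 * √n))) := (Real.exp_add _ _).symm
    _ ≤ _ := by
      refine Real.exp_le_exp.2 ?_
      have := mul_le_mul_of_nonneg_left hgap hb0
      linarith

/-- Slow escape of reversible nearest-neighbor MCMC dynamics from the free
energy well around the ground state `σ*`, at inverse temperatures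
`β_n ≥ n·2^{nε}`: with probability tending to one over the instance `X`, every
such chain started from the conditioned Gibbs measure stays in `I₃ ∪ ∂S` for an
exponentially long time. -/
theorem mcmc_slow_escape (ε : ℝ) (hε : 1 / 2 < ε) (hε1 : ε < 1) (β : ℕ → ℝ)
    (hβ : ∀ n : ℕ, (n : ℝ) * (2 : ℝ) ^ ((n : ℝ) * ε) ≤ β n)
    (σstar : (n : ℕ) → (Fin n → ℝ) → (Fin n → ℝ))
    (hcube : ∀ n X, isCube (σstar n X))
    (hmin : ∀ n X σ, isCube σ →
      |ip (σstar n X) X| / Real.sqrt n ≤ |ip σ X| / Real.sqrt n)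
    (hmeas : ∀ n, Measurable (σstar n)) :
    ∃ ρ : ℝ, 0 < ρ ∧ ρ < 1 ∧ ∃ c : ℝ, 0 < c ∧
      Tendsto (fun n : ℕ =>
        stdGaussian n {X : Fin n → ℝ |
          ∀ (Qm : (Fin n → Bool) → (Fin n → Bool) → ℝ)
            (P : Measure (ℕ → (Fin n → Bool))), IsProbabilityMeasure P →
            -- `Qm` is a stochastic matrix:
            (∀ s s', 0 ≤ Qm s s') →
            (∀ s, ∑ s', Qm s s' = 1) →
            -- nearest-neighbor moves only:
            (∀ s s', 0 < Qm s s' → hdist (spin s) (spin s') ≤ 1) →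
            -- detailed balance with respect to `π_{β_n}`:
            (∀ s s', gibbsWeight n (β n) X s * Qm s s' =
              gibbsWeight n (β n) X s' * Qm s' s) →
            -- `P` is the law of the chain with kernel `Qm` started from the
            -- Gibbs measure conditioned on `I₃ ∪ ∂S`:
            (∀ T : ℕ, ∀ path : ℕ → (Fin n → Bool),
              P {ω | ∀ t ≤ T, ω t = path t} =
                ENNReal.ofReal (initDist n (β n) X (σstar n X) (path 0) *
                  ∏ t ∈ Finset.range T, Qm (path t) (path (t + 1)))) →
            -- then the chain stays in the well for an exponentially long time:
            ∀ T : ℕ,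
              P {ω | ∃ t ≤ T, ¬ inWell (σstar n X) (ω t)} ≤
                ENNReal.ofReal ((T : ℝ) *
                  Real.exp (-c * β n * (2 : ℝ) ^ (-(n : ℝ) * ε)))})
        atTop (nhds 1) := by
  refine ⟨1 / 2, by norm_num, by norm_num, 1, one_pos, ?_⟩
  refine tendsto_of_tendsto_of_tendsto_of_le_of_le' tendsto_goodSet tendsto_const_nhds ?_
    (Eventually.of_forall fun n => prob_le_one)
  filter_upwards [eventually_weight_le hε hβ, eventually_ge_atTop 1] with n hw hn
  refine measure_mono fun X hX Qm P hP hQ hQ1 hnn hdb hpath T => ?_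
  obtain ⟨hX1, s, hs⟩ := hX
  have hb : 0 ≤ β n := (by positivity : (0 : ℝ) ≤ n * 2 ^ ((n : ℝ) * ε)).trans (hβ n)
  have hsqrt : 0 < √(n : ℝ) := Real.sqrt_pos.2 (by exact_mod_cast hn)
  have hmin' : |ip (σstar n X) X| ≤ 1 / (2 * (n : ℝ) ^ 2) :=
    ((div_le_div_iff_of_pos_right hsqrt).1 (hmin n X (spin s) (spin_eq_or s))).trans hs
  refine (escape_of_good hn hb (hcube n X) hX1 hmin' Qm P hQ hQ1 hnn hdb hpath T).trans
    (ENNReal.ofReal_le_ofReal ?_)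
  gcongr
end

section
/- Let m ∈ ℕ, let Σ̄ ∈ ℝ^{m×m} be a symmetric positive semidefinite matrix whose smallest eigenvalue λ satisfies 0 < λ ≤ 1, and let A = diag(γ₁, …, γ_m) with γ_i ∈ [0, 1] for all i. Define Σ = A·Σ̄·A + (I − A²). Then the smallest eigenvalue of Σ is at least λ, and consequently det(Σ) ≥ λ^m > 0. -/
/-!
Writing `A = diag(γ)` and `w = A v`, one has `vᵀ Σ v = wᵀ Σ̄ w + ∑ (1 - γᵢ²) vᵢ²`. The first term is
at least `lam * ∑ γᵢ² vᵢ²` by the Rayleigh bound for `Σ̄`, and since `lam ≤ 1` and `γᵢ² ≤ 1` the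
second is at least `lam * ∑ (1 - γᵢ²) vᵢ²`; adding gives the Rayleigh bound for `Σ`. Evaluated at unit
eigenvectors, that bound says that every eigenvalue of `Σ` is at least `lam`, so the determinant,
being their product, is at least `lam ^ m` (`pow_le_det_of_rayleigh`).
-/

open Matrix

lemma pow_le_det_of_rayleigh {m : ℕ} {S : Matrix (Fin m) (Fin m) ℝ} (hS : S.IsHermitian)
    {lam : ℝ} (hl0 : 0 ≤ lam)
    (hlow : ∀ v : Fin m → ℝ, lam * ∑ i, v i ^ 2 ≤ v ⬝ᵥ S.mulVec v) :
    lam ^ m ≤ S.det := by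
  have hev : ∀ i, lam ≤ hS.eigenvalues i := by
    intro i
    have h := hlow (hS.eigenvectorBasis i)
    have hn : ∑ j, (hS.eigenvectorBasis i) j ^ 2 = 1 := by
      rw [← EuclideanSpace.real_norm_sq_eq, hS.eigenvectorBasis.norm_eq_one, one_pow]
    rw [hS.eigenvalues_eq]
    simpa [hn] using h
  have hdet : S.det = ∏ i, hS.eigenvalues i := by simpa using hS.det_eq_prod_eigenvalues
  calc lam ^ m = ∏ _i : Fin m, lam := by simp
    _ ≤ ∏ i, hS.eigenvalues i := Finset.prod_le_prod (fun _ _ => hl0) (fun i _ => hev i)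
    _ = S.det := hdet.symm

/-- If `Σ̄` is symmetric PSD with smallest eigenvalue `λ ∈ (0,1]` and
`A = diag(γ₁,…,γ_m)` with `γ_i ∈ [0,1]`, then `Σ = AΣ̄A + (I − A²)` has smallest
eigenvalue at least `λ`, hence `det Σ ≥ λ^m > 0`. -/
theorem smallest_eigenvalue_lower_bound (m : ℕ)
    (Sb : Matrix (Fin m) (Fin m) ℝ) (hsymm : Sb.IsSymm)
    (lam : ℝ) (hl0 : 0 < lam) (hl1 : lam ≤ 1)
    -- `lam` is a lower bound on the Rayleigh quotient of `Σ̄` …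
    (hlow : ∀ v : Fin m → ℝ, lam * ∑ i, v i ^ 2 ≤ v ⬝ᵥ Sb.mulVec v)
    -- … attained by some nonzero vector, i.e. `lam` is the smallest eigenvalue:
    (hattain : ∃ v : Fin m → ℝ, v ≠ 0 ∧ v ⬝ᵥ Sb.mulVec v = lam * ∑ i, v i ^ 2)
    (γ : Fin m → ℝ) (hγ : ∀ i, 0 ≤ γ i ∧ γ i ≤ 1) :
    (∀ v : Fin m → ℝ,
      lam * ∑ i, v i ^ 2 ≤
        v ⬝ᵥ (Matrix.diagonal γ * Sb * Matrix.diagonal γ +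
          (1 - Matrix.diagonal γ * Matrix.diagonal γ)).mulVec v) ∧
    lam ^ m ≤ (Matrix.diagonal γ * Sb * Matrix.diagonal γ +
        (1 - Matrix.diagonal γ * Matrix.diagonal γ)).det ∧
    0 < (Matrix.diagonal γ * Sb * Matrix.diagonal γ +
        (1 - Matrix.diagonal γ * Matrix.diagonal γ)).det := by
  have hray : ∀ v : Fin m → ℝ,
      lam * ∑ i, v i ^ 2 ≤
        v ⬝ᵥ (Matrix.diagonal γ * Sb * Matrix.diagonal γ +
          (1 - Matrix.diagonal γ * Matrix.diagonal γ)).mulVec v := by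
    intro v
    have hquad : v ⬝ᵥ (Matrix.diagonal γ * Sb * Matrix.diagonal γ +
          (1 - Matrix.diagonal γ * Matrix.diagonal γ)).mulVec v =
        (Matrix.diagonal γ *ᵥ v) ⬝ᵥ Sb *ᵥ (Matrix.diagonal γ *ᵥ v) +
          ∑ i, (1 - γ i ^ 2) * v i ^ 2 := by
      rw [add_mulVec, dotProduct_add, ← mulVec_mulVec, ← mulVec_mulVec, dotProduct_mulVec,
        ← mulVec_transpose, diagonal_transpose, sub_mulVec, one_mulVec, diagonal_mul_diagonal]
      congr 1
      simp only [dotProduct, Pi.sub_apply, mulVec_diagonal]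
      exact Finset.sum_congr rfl fun i _ => by ring
    have hw := hlow (Matrix.diagonal γ *ᵥ v)
    have hrest : lam * ∑ i, v i ^ 2 ≤ lam * ∑ i, (Matrix.diagonal γ *ᵥ v) i ^ 2 +
        ∑ i, (1 - γ i ^ 2) * v i ^ 2 := by
      rw [Finset.mul_sum, Finset.mul_sum, ← Finset.sum_add_distrib]
      refine Finset.sum_le_sum fun i _ => ?_
      have hγ2 : 0 ≤ 1 - γ i ^ 2 := by nlinarith [(hγ i).1, (hγ i).2]
      -- the difference of the two sides is `(1 - lam) * (1 - γᵢ²) * vᵢ²`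
      have hdiff := mul_nonneg (mul_nonneg (sub_nonneg.2 hl1) hγ2) (sq_nonneg (v i))
      rw [mulVec_diagonal]
      nlinarith
    rw [hquad]
    linarith
  have hS : (Matrix.diagonal γ * Sb * Matrix.diagonal γ +
      (1 - Matrix.diagonal γ * Matrix.diagonal γ)).IsHermitian := by
    simp [Matrix.IsHermitian, conjTranspose_eq_transpose_of_trivial, hsymm.eq, Matrix.mul_assoc]
  have hdet := pow_le_det_of_rayleigh hS hl0.le hray
  exact ⟨hray, hdet, (pow_pos hl0 m).trans_le hdet⟩
end

section
/- For all integers k, ℓ ≥ 2: every coloring of the edges of the complete graph on C(k+ℓ−2, k−1) vertices with two colors (red and blue) contains either a set of k vertices all of whose connecting edges are red, or a set of ℓ vertices all of whose connecting edges are blue. Equivalently, the two-color Ramsey number satisfies R(k, ℓ) ≤ C(k+ℓ−2, k−1). -/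
/-!
The Erdős–Szekeres argument. With `a = k - 1` and `b = ℓ - 1`, `exists_mono_subset` shows by a double
induction on `a` and `b` that every vertex set `T` with at least `C(a + b, a)` elements contains a
red clique of size `a + 1` or a blue clique of size `b + 1`. Fix a vertex `v` of `T`. By Pascal's
rule, either the red neighbours of `v` in `T` number at least `C(a + b - 1, a - 1)`, or its blue
neighbours number at least `C(a + b - 1, a)`. The induction hypothesis applies in that neighbourhood,
and a clique one short of the desired size is completed by adding `v` (`mono_insert`).
-/

/-- A clique of color `x` grows by a vertex joined to all of it in color `x`. -/
lemma mono_insert {V : Type*} [DecidableEq V] (c : V → V → Bool) (hsymm : ∀ i j, c i j = c j i)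
    (x : Bool) (v : V) (S : Finset V) (hS : ∀ i ∈ S, ∀ j ∈ S, i ≠ j → c i j = x)
    (hv : ∀ i ∈ S, c v i = x) :
    ∀ i ∈ insert v S, ∀ j ∈ insert v S, i ≠ j → c i j = x := by
  intro i hi j hj hij
  rw [Finset.mem_insert] at hi hj
  rcases hi with rfl | hi <;> rcases hj with rfl | hj
  · exact absurd rfl hij
  · exact hv j hj
  · rw [hsymm]
    exact hv i hi
  · exact hS i hi j hj hij

/-- The Erdős–Szekeres bound inside an arbitrary vertex set `T`, with both clique sizes shifted by
one so that no truncated subtraction occurs. -/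
lemma exists_mono_subset {V : Type*} [DecidableEq V] (c : V → V → Bool)
    (hsymm : ∀ i j, c i j = c j i) (a b : ℕ) (T : Finset V) (hT : (a + b).choose a ≤ T.card) :
    ∃ S ⊆ T, (S.card = a + 1 ∧ ∀ i ∈ S, ∀ j ∈ S, i ≠ j → c i j = true) ∨
      (S.card = b + 1 ∧ ∀ i ∈ S, ∀ j ∈ S, i ≠ j → c i j = false) := by
  have hne : T.Nonempty :=
    Finset.card_pos.mp (lt_of_lt_of_le (Nat.choose_pos (Nat.le_add_right a b)) hT)
  obtain ⟨v, hvT⟩ := hne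
  induction a generalizing b T v with
  | zero => exact ⟨{v}, by simpa using hvT, Or.inl (by simp)⟩
  | succ a iha =>
    induction b generalizing T v with
    | zero => exact ⟨{v}, by simpa using hvT, Or.inr (by simp)⟩
    | succ b ihb =>
      set R := (T.erase v).filter (fun i => c v i = true) with hR
      set B := (T.erase v).filter (fun i => ¬ c v i = true) with hB
      have hcard : R.card + B.card + 1 = T.card := by
        rw [hR, hB, Finset.card_filter_add_card_filter_not, Finset.card_erase_add_one hvT]
      have hpascal : (a + 1 + (b + 1)).choose (a + 1)
          = (a + (b + 1)).choose a + (a + 1 + b).choose (a + 1) := by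
        rw [show a + 1 + (b + 1) = (a + (b + 1)) + 1 by ring, Nat.choose_succ_succ',
          show a + 1 + b = a + (b + 1) by ring]
      have hRT : R ⊆ T := (Finset.filter_subset _ _).trans (Finset.erase_subset _ _)
      have hBT : B ⊆ T := (Finset.filter_subset _ _).trans (Finset.erase_subset _ _)
      have hvR : v ∉ R := by simp [hR]
      have hvB : v ∉ B := by simp [hB]
      by_cases h : (a + (b + 1)).choose a ≤ R.card
      · obtain ⟨w, hw⟩ : R.Nonempty :=
          Finset.card_pos.mp (lt_of_lt_of_le (Nat.choose_pos (Nat.le_add_right _ _)) h)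
        obtain ⟨S, hSR, ⟨hS, hm⟩ | hS⟩ := iha (b + 1) R h w hw
        · refine ⟨insert v S, Finset.insert_subset hvT (hSR.trans hRT), Or.inl ⟨?_, ?_⟩⟩
          · rw [Finset.card_insert_of_notMem fun hv => hvR (hSR hv), hS]
          · exact mono_insert c hsymm true v S hm fun i hi => (Finset.mem_filter.mp (hSR hi)).2
        · exact ⟨S, hSR.trans hRT, Or.inr hS⟩
      · have h' : (a + 1 + b).choose (a + 1) ≤ B.card := by omega
        obtain ⟨w, hw⟩ : B.Nonempty :=
          Finset.card_pos.mp (lt_of_lt_of_le (Nat.choose_pos (Nat.le_add_right _ _)) h')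
        obtain ⟨S, hSB, hS | ⟨hS, hm⟩⟩ := ihb B h' w hw
        · exact ⟨S, hSB.trans hBT, Or.inl hS⟩
        · refine ⟨insert v S, Finset.insert_subset hvT (hSB.trans hBT), Or.inr ⟨?_, ?_⟩⟩
          · rw [Finset.card_insert_of_notMem fun hv => hvB (hSB hv), hS]
          · exact mono_insert c hsymm false v S hm fun i hi =>
              Bool.eq_false_of_not_eq_true (Finset.mem_filter.mp (hSB hi)).2

/-- Erdős–Szekeres bound for two-color Ramsey numbers:
`R(k, ℓ) ≤ C(k+ℓ−2, k−1)`. Any symmetric red/blue coloring of the edges of the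
complete graph on `C(k+ℓ−2, k−1)` vertices contains a red `K_k` or a blue `K_ℓ`. -/
theorem ramsey_two_color (k ℓ : ℕ) (hk : 2 ≤ k) (hl : 2 ≤ ℓ)
    (c : Fin ((k + ℓ - 2).choose (k - 1)) → Fin ((k + ℓ - 2).choose (k - 1)) → Bool)
    (hsymm : ∀ i j, c i j = c j i) :
    ∃ S : Finset (Fin ((k + ℓ - 2).choose (k - 1))),
      (S.card = k ∧ ∀ i ∈ S, ∀ j ∈ S, i ≠ j → c i j = true) ∨
      (S.card = ℓ ∧ ∀ i ∈ S, ∀ j ∈ S, i ≠ j → c i j = false) := by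
  obtain ⟨S, -, hS⟩ := exists_mono_subset c hsymm (k - 1) (ℓ - 1) Finset.univ (by
    rw [Finset.card_univ, Fintype.card_fin, show k - 1 + (ℓ - 1) = k + ℓ - 2 by omega])
  rw [Nat.sub_add_cancel (by omega : 1 ≤ k), Nat.sub_add_cancel (by omega : 1 ≤ ℓ)] at hS
  exact ⟨S, hS⟩
end

section
/- Let Q be a positive integer and define Ψ(x) = √((1 − x²/Q²)·(1 − (x+1)²/Q²)) + x(x+1)/Q² for x ∈ [0, Q−1]. Then Ψ is nonincreasing on [0, Q−1]; in particular, min_{k ∈ {0, 1, …, Q−1}} [ √((1 − k²/Q²)·(1 − (k+1)²/Q²)) + k(k+1)/Q² ] = Ψ(Q−1) = 1 − 1/Q. -/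
/-!
Put `q = 1/Q` and `p = x(x+1)/Q²`. Since `x² + (x+1)² = 2x(x+1) + 1`, the radicand equals
`(1 - p)² - q²`, so with `u = 1 - p` one has `Ψ = 1 - (u - √(u² - q²))`. As `x` grows over
`[0, Q-1]`, `u` decreases and stays nonnegative, and `u - √(u² - q²)` is nonincreasing in `u`
(`sqrt_sq_sub_add_le`); hence `Ψ` is nonincreasing. At `x = Q - 1` the radicand vanishes.
-/

/-- The function `Ψ(x) = √((1 − x²/Q²)(1 − (x+1)²/Q²)) + x(x+1)/Q²`. -/
noncomputable def Psi (Q : ℕ) (x : ℝ) : ℝ :=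
  Real.sqrt ((1 - x ^ 2 / (Q : ℝ) ^ 2) * (1 - (x + 1) ^ 2 / (Q : ℝ) ^ 2)) +
    x * (x + 1) / (Q : ℝ) ^ 2

/-- Monotonicity of `u ↦ √(u² - t) - u`: after squaring, it reduces to `√(v² - t) ≤ v`. -/
lemma sqrt_sq_sub_add_le {t u v : ℝ} (ht : 0 ≤ t) (hv : 0 ≤ v) (hvu : v ≤ u)
    (htv : t ≤ v ^ 2) : Real.sqrt (v ^ 2 - t) + (u - v) ≤ Real.sqrt (u ^ 2 - t) := by
  have hs : Real.sqrt (v ^ 2 - t) ≤ v := Real.sqrt_le_iff.mpr ⟨hv, by linarith⟩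
  have hsq := Real.sq_sqrt (sub_nonneg.mpr htv)
  apply Real.le_sqrt_of_sq_le
  nlinarith [mul_le_mul_of_nonneg_right hs (sub_nonneg.mpr hvu)]

lemma Psi_radicand_eq (Q : ℕ) (hQ : 0 < Q) (x : ℝ) :
    (1 - x ^ 2 / (Q : ℝ) ^ 2) * (1 - (x + 1) ^ 2 / (Q : ℝ) ^ 2) =
      (1 - x * (x + 1) / (Q : ℝ) ^ 2) ^ 2 - 1 / (Q : ℝ) ^ 2 := by
  have hQ' : (Q : ℝ) ≠ 0 := by positivity
  field_simp
  ring

lemma Psi_antitone (Q : ℕ) (hQ : 0 < Q) (x y : ℝ) (hx : 0 ≤ x) (hxy : x ≤ y)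
    (hy : y ≤ (Q : ℝ) - 1) : Psi Q y ≤ Psi Q x := by
  have hQ' : (0 : ℝ) < (Q : ℝ) ^ 2 := by positivity
  have hp : x * (x + 1) / (Q : ℝ) ^ 2 ≤ y * (y + 1) / (Q : ℝ) ^ 2 := by
    gcongr
    linarith
  have hp1 : y * (y + 1) / (Q : ℝ) ^ 2 ≤ 1 := by
    rw [div_le_one hQ']
    nlinarith
  have h1 : y ^ 2 / (Q : ℝ) ^ 2 ≤ 1 := by
    rw [div_le_one hQ']
    nlinarith
  have h2 : (y + 1) ^ 2 / (Q : ℝ) ^ 2 ≤ 1 := by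
    rw [div_le_one hQ']
    nlinarith
  have hr := mul_nonneg (sub_nonneg.mpr h1) (sub_nonneg.mpr h2)
  rw [Psi_radicand_eq Q hQ] at hr
  have key := sqrt_sq_sub_add_le (t := 1 / (Q : ℝ) ^ 2)
    (u := 1 - x * (x + 1) / (Q : ℝ) ^ 2) (v := 1 - y * (y + 1) / (Q : ℝ) ^ 2)
    (by positivity) (by linarith) (by linarith) (by linarith)
  unfold Psi
  rw [Psi_radicand_eq Q hQ, Psi_radicand_eq Q hQ]
  linarith

/-- `Ψ` is nonincreasing on `[0, Q−1]`; in particular its minimum over the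
integers `k = 0, …, Q−1` is `Ψ(Q−1) = 1 − 1/Q`. -/
theorem psi_nonincreasing (Q : ℕ) (hQ : 0 < Q) :
    (∀ x y : ℝ, 0 ≤ x → x ≤ y → y ≤ (Q : ℝ) - 1 → Psi Q y ≤ Psi Q x) ∧
    (∀ k : ℕ, k ≤ Q - 1 → Psi Q ((Q : ℝ) - 1) ≤ Psi Q k) ∧
    Psi Q ((Q : ℝ) - 1) = 1 - 1 / Q := by
  refine ⟨Psi_antitone Q hQ, fun k hk => ?_, ?_⟩
  · have hk' : (k : ℝ) + 1 ≤ Q := by exact_mod_cast (by omega : k + 1 ≤ Q)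
    exact Psi_antitone Q hQ _ _ k.cast_nonneg (by linarith) le_rfl
  · have hQ' : (Q : ℝ) ≠ 0 := by positivity
    have h0 : 1 - ((Q : ℝ) - 1 + 1) ^ 2 / (Q : ℝ) ^ 2 = 0 := by
      field_simp
      ring
    unfold Psi
    rw [h0, mul_zero, Real.sqrt_zero]
    field_simp
    ring
end
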